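/- Let π be a binomial transport plan with nodes (x, x⁻, x⁺, y⁻⁻, y⁻⁺, y⁺⁻, y⁺⁺), with right part π_r and left part π_l. Then ∫ |x+y| dπ_l(x,y) ≤ ∫ |x+y| dπ_r(x,y) holds if any of the following conditions is satisfied: (L1) y⁻⁺ ≤ y⁺⁻; (L2) x⁻+y⁺⁻ ≥ 0 and x⁻+y⁻⁻ ≥ 0; (L3) x⁺+y⁺⁺ ≤ 0 and x⁺+y⁻⁺ ≤ 0; (L4) x⁺+y⁻⁺ ≤ 0, x⁺+y⁺⁻ ≤ 0 and x⁺+y⁺⁺ ≥ 0; (L5) x⁻+y⁺⁻ ≥ 0, x⁻+y⁻⁺ ≥ 0 and x⁻+y⁻⁻ ≤ 0; (L6) x⁻+y⁻⁺ ≥ 0, x⁻+y⁻⁻ ≤ 0, x⁺+y⁺⁻ ≥ 0, y⁻⁻ ≤ y⁺⁻ ≤ y⁺⁺ ≤ y⁻⁺, (1−λ₋)(x⁺−x⁻) ≤ x⁺+y⁺⁻ and (1−λ₊)(x⁺−x⁻) ≤ x⁺+y⁺⁺, where λ₋, λ₊ are defined by λ₋y⁻⁻+(1−λ₋)y⁻⁺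 = y⁺⁻ and λ₊y⁻⁻+(1−λ₊)y⁻⁺ = y⁺⁺; (L7) x⁻+y⁻⁺ ≥ 0 ≥ x⁻+y⁻⁻, x⁻+y⁺⁺ ≥ 0, x⁺+y⁺⁻ ≤ 0, y⁺⁻ ≤ y⁻⁻ ≤ y⁺⁺ ≤ y⁻⁺ and λ(x⁺−x⁻) ≤ −(x⁻+y⁻⁻), where λ is defined by λy⁺⁻+(1−λ)y⁺⁺ = y⁻⁻; (L8) y⁻⁻ = y⁺⁻ =: y⁻, x⁺+y⁻ ≤ 0, x⁻+y⁻⁺ ≥ 0, x⁺+y⁺⁺ ≥ 0, y⁺⁺ ≤ y⁻⁺ and (1−λ)(x⁺−x⁻) ≤ x⁺+y⁺⁺, where λ is defined by λy⁻+(1−λ)y⁻⁺ = y⁺⁺; (L9) y⁻⁺ = y⁺⁺ and y⁻⁻ = y⁺⁻. -/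

import Mathlib

open MeasureTheory

noncomputable section

/-- `λ⁺`: the weight of the upper branch of the first step. -/
def lamP (x xm xp : ℝ) : ℝ := if xm < xp then (x - xm) / (xp - xm) else 1

/-- `λ⁻ := 1 - λ⁺`. -/
def lamM (x xm xp : ℝ) : ℝ := 1 - lamP x xm xp

/-- `λ⁻⁺`: the upper weight of the second step out of `x⁻`. -/
def lamMP (xm ymm ymp : ℝ) : ℝ := if ymm < ymp then (xm - ymm) / (ymp - ymm) else 1

/-- `λ⁻⁻ := 1 - λ⁻⁺`. -/
def lamMM (xm ymm ymp : ℝ) : ℝ := 1 - lamMP xm ymm ymp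

/-- `λ⁺⁺`: the upper weight of the second step out of `x⁺`. -/
def lamPP (xp ypm ypp : ℝ) : ℝ := if ypm < ypp then (xp - ypm) / (ypp - ypm) else 1

/-- `λ⁺⁻ := 1 - λ⁺⁺`. -/
def lamPM (xp ypm ypp : ℝ) : ℝ := 1 - lamPP xp ypm ypp

/-- The binomial transport plan (BTP) with nodes `(x, x⁻, x⁺, y⁻⁻, y⁻⁺, y⁺⁻, y⁺⁺)`,
a probability measure on `ℝ³`. -/
def BTP (x xm xp ymm ymp ypm ypp : ℝ) : Measure (ℝ × ℝ × ℝ) :=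
  ENNReal.ofReal (lamM x xm xp * lamMM xm ymm ymp) • Measure.dirac (x, xm, ymm) +
  ENNReal.ofReal (lamM x xm xp * lamMP xm ymm ymp) • Measure.dirac (x, xm, ymp) +
  ENNReal.ofReal (lamP x xm xp * lamPM xp ypm ypp) • Measure.dirac (x, xp, ypm) +
  ENNReal.ofReal (lamP x xm xp * lamPP xp ypm ypp) • Measure.dirac (x, xp, ypp)

/-- The right part `π_r` of the BTP with the given nodes. -/
def rightPart (x xm xp ymm ymp ypm ypp : ℝ) : Measure (ℝ × ℝ) :=
  ENNReal.ofReal (lamM x xm xp * lamMM xm ymm ymp) • Measure.dirac (xm, ymm) +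
  ENNReal.ofReal (lamM x xm xp * lamMP xm ymm ymp) • Measure.dirac (xm, ymp) +
  ENNReal.ofReal (lamP x xm xp * lamPM xp ypm ypp) • Measure.dirac (xp, ypm) +
  ENNReal.ofReal (lamP x xm xp * lamPP xp ypm ypp) • Measure.dirac (xp, ypp)

/-- The left part `π_l` of the BTP with the given nodes. -/
def leftPart (x xm xp ymm ymp ypm ypp : ℝ) : Measure (ℝ × ℝ) :=
  ENNReal.ofReal (lamM x xm xp * lamMM xm ymm ymp) • Measure.dirac (x, ymm) +
  ENNReal.ofReal (lamM x xm xp * lamMP xm ymm ymp) • Measure.dirac (x, ymp) +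
  ENNReal.ofReal (lamP x xm xp * lamPM xp ypm ypp) • Measure.dirac (x, ypm) +
  ENNReal.ofReal (lamP x xm xp * lamPP xp ypm ypp) • Measure.dirac (x, ypp)

/-- A measure on `ℝ²` has finite support. -/
def FinSupp (ρ : Measure (ℝ × ℝ)) : Prop :=
  ∃ S : Finset (ℝ × ℝ), ρ ((↑S : Set (ℝ × ℝ))ᶜ) = 0

/-- Equality of the two marginals of two measures on `ℝ²`. -/
def SameMarginals (ρ ρ' : Measure (ℝ × ℝ)) : Prop :=
  ρ'.map Prod.fst = ρ.map Prod.fst ∧ ρ'.map Prod.snd = ρ.map Prod.snd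

/-- The fiberwise barycenter (martingale) condition:
`∫_{{s}×ℝ} t dρ(s,t) = s · ρ({s}×ℝ)` for every `s`. -/
def FiberBarycenter (ρ : Measure (ℝ × ℝ)) : Prop :=
  ∀ s : ℝ, ∫ p in {p : ℝ × ℝ | p.1 = s}, p.2 ∂ρ =
    s * (ρ {p : ℝ × ℝ | p.1 = s}).toReal

/-!
Set `Δ y = |x⁺ + y| - |x⁻ + y|`. By convexity of the cost in the first variable, the right cost
exceeds the left cost by at least `λ⁻λ⁺` times the difference between the means of `Δ` over the
upper branch (mean `x⁺`) and over the lower branch (mean `x⁻`). The function `Δ` is nondecreasing: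
it is `2y + x⁻ + x⁺` truncated to `[x⁻ - x⁺, x⁺ - x⁻]`.

In (L1)–(L5) the largest value of `Δ` on the lower branch is at most its smallest value on the
upper branch. In the other cases the chord of `Δ` over one branch is a nondecreasing affine function
separating the two branches: the chord over the lower branch lies below `Δ` at the upper nodes in
(L6), (L8) and (L9), and the chord over the upper branch lies above `Δ` at the lower nodes in (L7).
-/

section TwoPointMean

variable {φ ψ : ℝ → ℝ} {m u v : ℝ}

theorem lamP_nonneg (hu : u ≤ m) (hv : m ≤ v) : 0 ≤ lamP m u v := by
  unfold lamP
  split_ifs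
  · exact div_nonneg (sub_nonneg.2 hu) (sub_nonneg.2 (hu.trans hv))
  · exact zero_le_one

theorem lamM_nonneg (hv : m ≤ v) : 0 ≤ lamM m u v := by
  unfold lamM lamP
  split_ifs with huv
  · rw [sub_nonneg, div_le_one (sub_pos.2 huv)]
    gcongr
  · rw [sub_self]

theorem lamM_mul_add_lamP_mul (hu : u ≤ m) (hv : m ≤ v) :
    lamM m u v * u + lamP m u v * v = m := by
  unfold lamM lamP
  split_ifs with huv
  · have : v - u ≠ 0 := (sub_pos.2 huv).ne'
    field_simp
    ring
  · linarith

/-- The mean of `φ` under the probability measure on `{u, v}` with barycentre `m`. The weights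
`lamMM`, `lamMP` and `lamPM`, `lamPP` of the second step unfold to `lamM`, `lamP` at the nodes of
that step, so one definition covers all three two-point measures of a BTP. -/
def twoPointMean (φ : ℝ → ℝ) (m u v : ℝ) : ℝ :=
  lamM m u v * φ u + lamP m u v * φ v

theorem twoPointMean_le_twoPointMean (hu : u ≤ m) (hv : m ≤ v) (hφu : φ u ≤ ψ u)
    (hφv : φ v ≤ ψ v) : twoPointMean φ m u v ≤ twoPointMean ψ m u v :=
  add_le_add (mul_le_mul_of_nonneg_left hφu (lamM_nonneg hv))
    (mul_le_mul_of_nonneg_left hφv (lamP_nonneg hu hv))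

theorem twoPointMean_const (c : ℝ) : twoPointMean (fun _ ↦ c) m u v = c := by
  unfold twoPointMean lamM
  ring

theorem twoPointMean_sub :
    twoPointMean (fun y ↦ φ y - ψ y) m u v = twoPointMean φ m u v - twoPointMean ψ m u v := by
  unfold twoPointMean
  ring

theorem twoPointMean_add_mul (c d : ℝ) : twoPointMean (fun y ↦ c * φ y + d * ψ y) m u v =
    c * twoPointMean φ m u v + d * twoPointMean ψ m u v := by
  unfold twoPointMean
  ring

theorem le_twoPointMean_of_convexOn (hφ : ConvexOn ℝ (Set.Icc u v) φ) (hu : u ≤ m) (hv : m ≤ v) :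
    φ m ≤ twoPointMean φ m u v := by
  have huv := hu.trans hv
  have := hφ.2 (Set.left_mem_Icc.2 huv) (Set.right_mem_Icc.2 huv) (lamM_nonneg hv)
    (lamP_nonneg hu hv) (sub_add_cancel _ _)
  simpa only [twoPointMean, smul_eq_mul, lamM_mul_add_lamP_mul hu hv] using this

end TwoPointMean

section Chord

variable {φ : ℝ → ℝ} {l m n s t u v y : ℝ}

/-- The affine function agreeing with `φ` at `u` and `v`. For `u = v` the convention
`slope φ u u = 0` makes it constant, so that it agrees with `φ` at both nodes in this case too. -/
def chord (φ : ℝ → ℝ) (u v y : ℝ) : ℝ :=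
  φ u + slope φ u v * (y - u)

theorem chord_left : chord φ u v u = φ u := by
  simp [chord]

theorem chord_of_convexCombination (hl : l * u + (1 - l) * v = y) :
    chord φ u v y = l * φ u + (1 - l) * φ v := by
  have hslope : (v - u) * slope φ u v = φ v - φ u := sub_smul_slope φ u v
  subst hl
  unfold chord
  linear_combination (1 - l) * hslope

theorem chord_right : chord φ u v v = φ v := by
  rw [chord_of_convexCombination (l := 0) (by ring)]
  ring

theorem chord_monotone (huv : u ≤ v) (hφ : φ u ≤ φ v) : Monotone (chord φ u v) := by
  have hslope : 0 ≤ slope φ u v := (slope_nonneg_iff_of_le huv).2 hφ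
  intro y z hyz
  unfold chord
  gcongr

theorem twoPointMean_chord (hs : s ≤ m) (ht : m ≤ t) :
    twoPointMean (chord φ u v) m s t = chord φ u v m := by
  have hbary := lamM_mul_add_lamP_mul hs ht
  unfold lamM at hbary
  unfold twoPointMean chord lamM
  linear_combination slope φ u v * hbary

theorem twoPointMean_eq_chord (hu : u ≤ m) (hv : m ≤ v) :
    twoPointMean φ m u v = chord φ u v m := by
  rw [← twoPointMean_chord hu hv]
  simp only [twoPointMean, chord_left, chord_right]

theorem twoPointMean_le_of_chord_le (hmn : m ≤ n) (hu : u ≤ m) (hv : m ≤ v) (hs : s ≤ n)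
    (ht : n ≤ t) (huv : φ u ≤ φ v) (hchord_s : chord φ u v s ≤ φ s)
    (hchord_t : chord φ u v t ≤ φ t) : twoPointMean φ m u v ≤ twoPointMean φ n s t :=
  calc twoPointMean φ m u v
    _ = chord φ u v m := twoPointMean_eq_chord hu hv
    _ ≤ chord φ u v n := chord_monotone (hu.trans hv) huv hmn
    _ = twoPointMean (chord φ u v) n s t := (twoPointMean_chord hs ht).symm
    _ ≤ twoPointMean φ n s t := twoPointMean_le_twoPointMean hs ht hchord_s hchord_t

theorem twoPointMean_le_of_le_chord (hmn : m ≤ n) (hu : u ≤ m) (hv : m ≤ v) (hs : s ≤ n)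
    (ht : n ≤ t) (hst : φ s ≤ φ t) (hchord_u : φ u ≤ chord φ s t u)
    (hchord_v : φ v ≤ chord φ s t v) : twoPointMean φ m u v ≤ twoPointMean φ n s t :=
  calc twoPointMean φ m u v
    _ ≤ twoPointMean (chord φ s t) m u v := twoPointMean_le_twoPointMean hu hv hchord_u hchord_v
    _ = chord φ s t m := twoPointMean_chord hu hv
    _ ≤ chord φ s t n := chord_monotone (hs.trans ht) hst hmn
    _ = twoPointMean φ n s t := (twoPointMean_eq_chord hs ht).symm

theorem twoPointMean_le_of_right_le_left (hu : u ≤ m) (hv : m ≤ v) (hs : s ≤ n) (ht : n ≤ t)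
    (huv : φ u ≤ φ v) (hst : φ s ≤ φ t) (hvs : φ v ≤ φ s) :
    twoPointMean φ m u v ≤ twoPointMean φ n s t :=
  calc twoPointMean φ m u v
    _ ≤ twoPointMean (fun _ ↦ φ v) m u v := twoPointMean_le_twoPointMean hu hv huv le_rfl
    _ = φ v := twoPointMean_const _
    _ ≤ φ s := hvs
    _ = twoPointMean (fun _ ↦ φ s) n s t := (twoPointMean_const _).symm
    _ ≤ twoPointMean φ n s t := twoPointMean_le_twoPointMean hs ht le_rfl hst

end Chord

section Cost

theorem integral_sum_ofReal_smul_dirac {α ι E : Type*} [MeasurableSpace α]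
    [MeasurableSingletonClass α] [NormedAddCommGroup E] [NormedSpace ℝ E] [CompleteSpace E]
    (I : Finset ι) {w : ι → ℝ} (hw : ∀ i ∈ I, 0 ≤ w i) (p : ι → α) (f : α → E) :
    ∫ a, f a ∂(∑ i ∈ I, ENNReal.ofReal (w i) • Measure.dirac (p i)) = ∑ i ∈ I, w i • f (p i) := by
  rw [integral_finsetSum_measure fun i _ ↦
    (integrable_dirac enorm_lt_top).smul_measure ENNReal.ofReal_ne_top]
  refine Finset.sum_congr rfl fun i hi ↦ ?_
  rw [integral_smul_measure, integral_dirac, ENNReal.toReal_ofReal (hw i hi)]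

variable {x xm xp ymm ymp ypm ypp : ℝ}

/-- The weights of the four branches of a BTP, in the order `(x⁻, y⁻⁻)`, `(x⁻, y⁻⁺)`, `(x⁺, y⁺⁻)`,
`(x⁺, y⁺⁺)`; they are common to its left and right parts. -/
def branchWeight (x xm xp ymm ymp ypm ypp : ℝ) : Fin 4 → ℝ :=
  ![lamM x xm xp * lamMM xm ymm ymp, lamM x xm xp * lamMP xm ymm ymp,
    lamP x xm xp * lamPM xp ypm ypp, lamP x xm xp * lamPP xp ypm ypp]

theorem branchWeight_nonneg (h1 : xm ≤ x) (h2 : x ≤ xp) (h3 : ymm ≤ xm) (h4 : xm ≤ ymp)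
    (h5 : ypm ≤ xp) (h6 : xp ≤ ypp) : 0 ≤ branchWeight x xm xp ymm ymp ypm ypp := by
  have hM : 0 ≤ lamM x xm xp := lamM_nonneg h2
  have hP : 0 ≤ lamP x xm xp := lamP_nonneg h1 h2
  intro i
  fin_cases i
  · exact mul_nonneg hM (lamM_nonneg h4)
  · exact mul_nonneg hM (lamP_nonneg h3 h4)
  · exact mul_nonneg hP (lamM_nonneg h6)
  · exact mul_nonneg hP (lamP_nonneg h5 h6)

theorem integral_leftPart (f : ℝ × ℝ → ℝ) (h1 : xm ≤ x) (h2 : x ≤ xp) (h3 : ymm ≤ xm)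
    (h4 : xm ≤ ymp) (h5 : ypm ≤ xp) (h6 : xp ≤ ypp) :
    ∫ p, f p ∂(leftPart x xm xp ymm ymp ypm ypp) =
      lamM x xm xp * twoPointMean (fun y ↦ f (x, y)) xm ymm ymp +
        lamP x xm xp * twoPointMean (fun y ↦ f (x, y)) xp ypm ypp := by
  have hsum := integral_sum_ofReal_smul_dirac Finset.univ
    (fun i _ ↦ branchWeight_nonneg h1 h2 h3 h4 h5 h6 i) ![(x, ymm), (x, ymp), (x, ypm), (x, ypp)] f
  simp only [Fin.sum_univ_four, branchWeight, Matrix.cons_val, smul_eq_mul] at hsum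
  rw [leftPart, hsum]
  simp only [twoPointMean, lamMM, lamPM, lamM, lamMP, lamPP, lamP]
  ring

theorem integral_rightPart (f : ℝ × ℝ → ℝ) (h1 : xm ≤ x) (h2 : x ≤ xp) (h3 : ymm ≤ xm)
    (h4 : xm ≤ ymp) (h5 : ypm ≤ xp) (h6 : xp ≤ ypp) :
    ∫ p, f p ∂(rightPart x xm xp ymm ymp ypm ypp) =
      lamM x xm xp * twoPointMean (fun y ↦ f (xm, y)) xm ymm ymp +
        lamP x xm xp * twoPointMean (fun y ↦ f (xp, y)) xp ypm ypp := by
  have hsum := integral_sum_ofReal_smul_dirac Finset.univ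
    (fun i _ ↦ branchWeight_nonneg h1 h2 h3 h4 h5 h6 i)
    ![(xm, ymm), (xm, ymp), (xp, ypm), (xp, ypp)] f
  simp only [Fin.sum_univ_four, branchWeight, Matrix.cons_val, smul_eq_mul] at hsum
  rw [rightPart, hsum]
  simp only [twoPointMean, lamMM, lamPM, lamM, lamMP, lamPP, lamP]
  ring

theorem integral_leftPart_le_integral_rightPart {f : ℝ × ℝ → ℝ}
    (hf : ∀ y, ConvexOn ℝ (Set.Icc xm xp) fun t ↦ f (t, y)) (h1 : xm ≤ x) (h2 : x ≤ xp)
    (h3 : ymm ≤ xm) (h4 : xm ≤ ymp) (h5 : ypm ≤ xp) (h6 : xp ≤ ypp)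
    (hmean : twoPointMean (fun y ↦ f (xp, y) - f (xm, y)) xm ymm ymp ≤
      twoPointMean (fun y ↦ f (xp, y) - f (xm, y)) xp ypm ypp) :
    ∫ p, f p ∂(leftPart x xm xp ymm ymp ypm ypp) ≤
      ∫ p, f p ∂(rightPart x xm xp ymm ymp ypm ypp) := by
  have hconv (y : ℝ) : f (x, y) ≤ lamM x xm xp * f (xm, y) + lamP x xm xp * f (xp, y) :=
    le_twoPointMean_of_convexOn (hf y) h1 h2
  have hmix {m u v : ℝ} (hu : u ≤ m) (hv : m ≤ v) : twoPointMean (fun y ↦ f (x, y)) m u v ≤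
      lamM x xm xp * twoPointMean (fun y ↦ f (xm, y)) m u v +
        lamP x xm xp * twoPointMean (fun y ↦ f (xp, y)) m u v := by
    rw [← twoPointMean_add_mul]
    exact twoPointMean_le_twoPointMean hu hv (hconv u) (hconv v)
  rw [twoPointMean_sub, twoPointMean_sub] at hmean
  rw [integral_leftPart f h1 h2 h3 h4 h5 h6, integral_rightPart f h1 h2 h3 h4 h5 h6]
  have hM : 0 ≤ lamM x xm xp := lamM_nonneg h2
  have hP : 0 ≤ lamP x xm xp := lamP_nonneg h1 h2
  have hlamM : lamM x xm xp = 1 - lamP x xm xp := rfl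
  have hlower := mul_le_mul_of_nonneg_left (hmix h3 h4) hM
  have hupper := mul_le_mul_of_nonneg_left (hmix h5 h6) hP
  have hgain := mul_le_mul_of_nonneg_left hmean (mul_nonneg hM hP)
  rw [hlamM] at hlower hupper hgain ⊢
  linarith

end Cost

section AbsIncrement

variable {a b l u v y : ℝ}

/-- The increment of the cost `|t + y|` as `t` goes from `a` to `b`; it is the function `Δ` above
for `a = x⁻` and `b = x⁺`. -/
def absIncrement (a b y : ℝ) : ℝ :=
  |b + y| - |a + y|

theorem absIncrement_of_nonneg (hab : a ≤ b) (hy : 0 ≤ a + y) : absIncrement a b y = b - a := by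
  rw [absIncrement, abs_of_nonneg hy, abs_of_nonneg (by linarith)]
  ring

theorem absIncrement_of_nonpos (hab : a ≤ b) (hy : b + y ≤ 0) : absIncrement a b y = a - b := by
  rw [absIncrement, abs_of_nonpos hy, abs_of_nonpos (by linarith)]
  ring

theorem absIncrement_of_nonpos_of_nonneg (ha : a + y ≤ 0) (hb : 0 ≤ b + y) :
    absIncrement a b y = a + b + 2 * y := by
  rw [absIncrement, abs_of_nonpos ha, abs_of_nonneg hb]
  ring

theorem absIncrement_eq_max_min (hab : a ≤ b) :
    absIncrement a b y = max (a - b) (min (b - a) (a + b + 2 * y)) := by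
  rcases le_total 0 (a + y) with ha | ha
  · rw [absIncrement_of_nonneg hab ha, min_eq_left (by linarith), max_eq_right (by linarith)]
  · rw [min_eq_right (by linarith)]
    rcases le_total (b + y) 0 with hb | hb
    · rw [absIncrement_of_nonpos hab hb, max_eq_left (by linarith)]
    · rw [absIncrement_of_nonpos_of_nonneg ha hb, max_eq_right (by linarith)]

theorem absIncrement_monotone (hab : a ≤ b) : Monotone (absIncrement a b) := by
  intro y z hyz
  rw [absIncrement_eq_max_min hab, absIncrement_eq_max_min hab]
  gcongr

theorem absIncrement_le (hab : a ≤ b) : absIncrement a b y ≤ b - a := by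
  rw [absIncrement_eq_max_min hab]
  exact max_le (by linarith) (min_le_left _ _)

theorem le_absIncrement (hab : a ≤ b) : a - b ≤ absIncrement a b y := by
  rw [absIncrement_eq_max_min hab]
  exact le_max_left _ _

theorem slope_absIncrement_le_two (huv : u ≤ v) : slope (absIncrement a b) u v ≤ 2 := by
  have hb : |b + v| - |b + u| ≤ v - u := by
    simpa [abs_of_nonneg (sub_nonneg.2 huv)] using abs_sub_abs_le_abs_sub (b + v) (b + u)
  have ha : |a + u| - |a + v| ≤ v - u := by
    simpa [abs_of_nonpos (sub_nonpos.2 huv)] using abs_sub_abs_le_abs_sub (a + u) (a + v)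
  rw [slope_def_field]
  refine div_le_of_le_mul₀ (sub_nonneg.2 huv) zero_le_two ?_
  unfold absIncrement
  linarith

theorem chord_absIncrement_le (hab : a ≤ b) (huy : u ≤ y) (hyv : y ≤ v) (hy : 0 ≤ b + y)
    (hv : 0 ≤ a + v) (hl : l * u + (1 - l) * v = y) (hl' : (1 - l) * (b - a) ≤ b + y) :
    chord (absIncrement a b) u v y ≤ absIncrement a b y := by
  have huv := huy.trans hyv
  rcases le_total 0 (a + y) with hay | hay
  · calc chord (absIncrement a b) u v y
      _ ≤ chord (absIncrement a b) u v v := chord_monotone huv (absIncrement_monotone hab huv) hyv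
      _ = absIncrement a b v := chord_right
      _ ≤ b - a := absIncrement_le hab
      _ = absIncrement a b y := (absIncrement_of_nonneg hab hay).symm
  rw [absIncrement_of_nonpos_of_nonneg hay hy]
  rcases le_total (b + u) 0 with hu | hu
  · rw [chord_of_convexCombination hl, absIncrement_of_nonpos hab hu,
      absIncrement_of_nonneg hab hv]
    linarith
  · calc chord (absIncrement a b) u v y
      _ ≤ absIncrement a b u + 2 * (y - u) := by
        unfold chord
        gcongr
        exact slope_absIncrement_le_two huv
      _ = a + b + 2 * y := by
        rw [absIncrement_of_nonpos_of_nonneg (by linarith) hu]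
        ring

theorem absIncrement_le_chord (hab : a ≤ b) (huy : u ≤ y) (hu : b + u ≤ 0) (hv : 0 ≤ a + v)
    (hy : a + y ≤ 0) (hl : l * u + (1 - l) * v = y) (hl' : l * (b - a) ≤ -(a + y)) :
    absIncrement a b y ≤ chord (absIncrement a b) u v y := by
  have huv : u ≤ v := by linarith
  rcases le_total (b + y) 0 with hby | hby
  · calc absIncrement a b y
      _ = absIncrement a b u := by
        rw [absIncrement_of_nonpos hab hby, absIncrement_of_nonpos hab hu]
      _ = chord (absIncrement a b) u v u := chord_left.symm
      _ ≤ chord (absIncrement a b) u v y := chord_monotone huv (absIncrement_monotone hab huv) huy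
  · rw [absIncrement_of_nonpos_of_nonneg hy hby, chord_of_convexCombination hl,
      absIncrement_of_nonpos hab hu, absIncrement_of_nonneg hab hv]
    linarith

theorem absIncrement_le_chord_of_le (hab : a ≤ b) (huv : u ≤ v) (hv : 0 ≤ a + v) (hvy : v ≤ y) :
    absIncrement a b y ≤ chord (absIncrement a b) u v y :=
  calc absIncrement a b y
    _ ≤ b - a := absIncrement_le hab
    _ = absIncrement a b v := (absIncrement_of_nonneg hab hv).symm
    _ = chord (absIncrement a b) u v v := chord_right.symm
    _ ≤ chord (absIncrement a b) u v y := chord_monotone huv (absIncrement_monotone hab huv) hvy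

theorem convexOn_abs_add_const {D : Set ℝ} (hD : Convex ℝ D) (c : ℝ) :
    ConvexOn ℝ D fun t ↦ |t + c| := by
  simpa [Real.dist_eq] using convexOn_dist (-c) hD

theorem integral_abs_add_leftPart_le {x xm xp ymm ymp ypm ypp : ℝ} (h1 : xm ≤ x) (h2 : x ≤ xp)
    (h3 : ymm ≤ xm) (h4 : xm ≤ ymp) (h5 : ypm ≤ xp) (h6 : xp ≤ ypp)
    (hmean : twoPointMean (absIncrement xm xp) xm ymm ymp ≤
      twoPointMean (absIncrement xm xp) xp ypm ypp) :
    ∫ p : ℝ × ℝ, |p.1 + p.2| ∂(leftPart x xm xp ymm ymp ypm ypp) ≤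
      ∫ p : ℝ × ℝ, |p.1 + p.2| ∂(rightPart x xm xp ymm ymp ypm ypp) :=
  integral_leftPart_le_integral_rightPart (convexOn_abs_add_const (convex_Icc xm xp))
    h1 h2 h3 h4 h5 h6 hmean

end AbsIncrement

/-- Computational lemma: the cost (for `|x + y|`) of the left part of a BTP is
dominated by the cost of its right part whenever any of the conditions
(L1)–(L9) holds. -/
theorem btp_left_le_right_cases
    (x xm xp ymm ymp ypm ypp : ℝ)
    (h1 : xm ≤ x) (h2 : x ≤ xp)
    (h3 : ymm ≤ xm) (h4 : xm ≤ ymp)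
    (h5 : ypm ≤ xp) (h6 : xp ≤ ypp)
    (hcases :
      -- (L1)
      (ymp ≤ ypm) ∨
      -- (L2)
      (xm + ypm ≥ 0 ∧ xm + ymm ≥ 0) ∨
      -- (L3)
      (xp + ypp ≤ 0 ∧ xp + ymp ≤ 0) ∨
      -- (L4)
      (xp + ymp ≤ 0 ∧ xp + ypm ≤ 0 ∧ xp + ypp ≥ 0) ∨
      -- (L5)
      (xm + ypm ≥ 0 ∧ xm + ymp ≥ 0 ∧ xm + ymm ≤ 0) ∨
      -- (L6)
      (xm + ymp ≥ 0 ∧ xm + ymm ≤ 0 ∧ xp + ypm ≥ 0 ∧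
        ymm ≤ ypm ∧ ypm ≤ ypp ∧ ypp ≤ ymp ∧
        ∃ lm lp : ℝ,
          lm * ymm + (1 - lm) * ymp = ypm ∧
          lp * ymm + (1 - lp) * ymp = ypp ∧
          (1 - lm) * (xp - xm) ≤ xp + ypm ∧
          (1 - lp) * (xp - xm) ≤ xp + ypp) ∨
      -- (L7)
      (xm + ymp ≥ 0 ∧ 0 ≥ xm + ymm ∧ xm + ypp ≥ 0 ∧ xp + ypm ≤ 0 ∧
        ypm ≤ ymm ∧ ymm ≤ ypp ∧ ypp ≤ ymp ∧
        ∃ l : ℝ, l * ypm + (1 - l) * ypp = ymm ∧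
          l * (xp - xm) ≤ -(xm + ymm)) ∨
      -- (L8)
      (ymm = ypm ∧ xp + ymm ≤ 0 ∧ xm + ymp ≥ 0 ∧ xp + ypp ≥ 0 ∧ ypp ≤ ymp ∧
        ∃ l : ℝ, l * ymm + (1 - l) * ymp = ypp ∧
          (1 - l) * (xp - xm) ≤ xp + ypp) ∨
      -- (L9)
      (ymp = ypp ∧ ymm = ypm)) :
    ∫ p : ℝ × ℝ, |p.1 + p.2| ∂(leftPart x xm xp ymm ymp ypm ypp) ≤
      ∫ p : ℝ × ℝ, |p.1 + p.2| ∂(rightPart x xm xp ymm ymp ypm ypp) := by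
  have hab := h1.trans h2
  have hmono := absIncrement_monotone hab
  have hlower := hmono (h3.trans h4)
  have hupper := hmono (h5.trans h6)
  have separated := twoPointMean_le_of_right_le_left h3 h4 h5 h6 hlower hupper
  have lower_chord := twoPointMean_le_of_chord_le hab h3 h4 h5 h6 hlower
  have upper_chord := twoPointMean_le_of_le_chord hab h3 h4 h5 h6 hupper
  apply integral_abs_add_leftPart_le h1 h2 h3 h4 h5 h6
  rcases hcases with L1 | ⟨hpm, -⟩ | ⟨-, hmp⟩ | ⟨hmp, -⟩ | ⟨hpm, -⟩ |
    ⟨hmp, -, hpm, hmm_pm, hpm_pp, hpp_mp, lm, lp, hlm, hlp, hlm', hlp'⟩ |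
    ⟨-, hmm, hpp, hpm, hpm_mm, -, hpp_mp, l, hl, hl'⟩ |
    ⟨rfl, -, hmp, hpp, hpp_mp, l, hl, hl'⟩ | ⟨rfl, rfl⟩
  · exact separated (hmono L1)
  · exact separated ((absIncrement_le hab).trans_eq (absIncrement_of_nonneg hab hpm).symm)
  · exact separated ((absIncrement_of_nonpos hab hmp).trans_le (le_absIncrement hab))
  · exact separated ((absIncrement_of_nonpos hab hmp).trans_le (le_absIncrement hab))
  · exact separated ((absIncrement_le hab).trans_eq (absIncrement_of_nonneg hab hpm).symm)
  · exact lower_chord (chord_absIncrement_le hab hmm_pm (hpm_pp.trans hpp_mp) hpm hmp hlm hlm')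
      (chord_absIncrement_le hab (hmm_pm.trans hpm_pp) hpp_mp (by linarith) hmp hlp hlp')
  · exact upper_chord (absIncrement_le_chord hab hpm_mm hpm hpp hmm hl hl')
      (absIncrement_le_chord_of_le hab (h5.trans h6) hpp hpp_mp)
  · exact lower_chord chord_left.le (chord_absIncrement_le hab (h5.trans h6) hpp_mp hpp hmp hl hl')
  · exact lower_chord chord_left.le chord_right.le
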